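/- Let G be a reachability game, let R be a bisimulation on G, and let (s1, s2) ∈ R. Then REACH wins from s1 in G if and only if REACH wins from s2 in G. -/

import Mathlib

universe u

/-- A reachability game over a state type `S`. States with `isReach s` are
controlled by player REACH, the others by player SAFE. -/
structure Game (S : Type u) where
  isReach : S → Prop
  Safe : S → S → Prop
  Reach : S → S → Prop
  Init : Set S
  Goal : Set S
  safe_src : ∀ s s', Safe s s' → ¬ isReach s
  reach_src : ∀ s s', Reach s s' → isReach s

namespace Game

variable {S : Type u}

/-- The edge relation `E = Safe ∪ Reach`. -/
def E (G : Game S) (s s' : S) : Prop := G.Safe s s' ∨ G.Reach s s'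

/-- A trap state has no outgoing `E`-transition. -/
def Trap (G : Game S) (s : S) : Prop := ∀ s', ¬ G.E s s'

/-- A play: an `E`-path which is infinite (`len = ⊤`) or finite
(`len = n`) and then ends in a trap state. Values of `seq` beyond a finite
length are irrelevant. -/
structure Play (G : Game S) where
  seq : ℕ → S
  len : ℕ∞
  step : ∀ i : ℕ, (i : ℕ∞) < len → G.E (seq i) (seq (i + 1))
  fin_trap : ∀ n : ℕ, len = (n : ℕ∞) → G.Trap (seq n)

/-- REACH wins a play if some state of the play is a goal state. -/
def ReachWinsPlay (G : Game S) (p : G.Play) : Prop :=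
  ∃ k : ℕ, (k : ℕ∞) ≤ p.len ∧ p.seq k ∈ G.Goal

/-- SAFE wins a play iff REACH does not. -/
def SafeWinsPlay (G : Game S) (p : G.Play) : Prop := ¬ G.ReachWinsPlay p

/-- The list `[f 0, …, f (n-1)]`. -/
def listPrefix (f : ℕ → S) (n : ℕ) : List S := (List.range n).map f

/-- A reachability strategy: on any nonempty sequence ending in a non-trap
REACH state it chooses a `Reach`-successor. -/
def IsReachStrategy (G : Game S) (σ : List S → S) : Prop :=
  ∀ (ω : List S) (s : S), G.isReach s → ¬ G.Trap s → G.Reach s (σ (ω ++ [s]))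

/-- A safety strategy: on any nonempty sequence ending in a non-trap SAFE
state it chooses a `Safe`-successor. -/
def IsSafeStrategy (G : Game S) (σ : List S → S) : Prop :=
  ∀ (ω : List S) (s : S), ¬ G.isReach s → ¬ G.Trap s → G.Safe s (σ (ω ++ [s]))

/-- Consistency of a play with a reachability strategy. -/
def ConsistentR (G : Game S) (σ : List S → S) (p : G.Play) : Prop :=
  ∀ i : ℕ, (i : ℕ∞) < p.len → G.isReach (p.seq i) →
    p.seq (i + 1) = σ (listPrefix p.seq (i + 1))

/-- Consistency of a play with a safety strategy. -/
def ConsistentS (G : Game S) (σ : List S → S) (p : G.Play) : Prop :=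
  ∀ i : ℕ, (i : ℕ∞) < p.len → ¬ G.isReach (p.seq i) →
    p.seq (i + 1) = σ (listPrefix p.seq (i + 1))

/-- `σ` is a reachability strategy winning from `s`. -/
def WinningReachStrategyFrom (G : Game S) (σ : List S → S) (s : S) : Prop :=
  G.IsReachStrategy σ ∧
    ∀ p : G.Play, p.seq 0 = s → G.ConsistentR σ p → G.ReachWinsPlay p

/-- `σ` is a safety strategy winning from `s`. -/
def WinningSafeStrategyFrom (G : Game S) (σ : List S → S) (s : S) : Prop :=
  G.IsSafeStrategy σ ∧
    ∀ p : G.Play, p.seq 0 = s → G.ConsistentS σ p → G.SafeWinsPlay p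

/-- REACH wins from `s`. -/
def ReachWinsFrom (G : Game S) (s : S) : Prop :=
  ∃ σ : List S → S, G.WinningReachStrategyFrom σ s

/-- SAFE wins from `s`. -/
def SafeWinsFrom (G : Game S) (s : S) : Prop :=
  ∃ σ : List S → S, G.WinningSafeStrategyFrom σ s

/-- Sources of a transition predicate. -/
def Pre (T : S → S → Prop) : Set S := {s | ∃ s', T s s'}

/-- Targets of a transition predicate. -/
def Post (T : S → S → Prop) : Set S := {s' | ∃ s, T s s'}

/-- Enforceable transitions of `T` in `G`. -/
def Enf (G : Game S) (T : S → S → Prop) (s s' : S) : Prop :=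
  G.E s s' ∧ T s s' ∧ ∀ s'', G.Safe s s'' → T s s''

/-- `C` is a necessary subgoal: every play of `G` (from `Init`) reaching
`Goal` at index `n` crosses `C` at some index `k < n`. -/
def NecessarySubgoal (G : Game S) (C : S → S → Prop) : Prop :=
  ∀ p : G.Play, p.seq 0 ∈ G.Init →
    ∀ n : ℕ, (n : ℕ∞) ≤ p.len → p.seq n ∈ G.Goal →
      ∃ k < n, C (p.seq k) (p.seq (k + 1))

/-- `ρ 0 … ρ n` is a play prefix: an `E`-path avoiding `Goal` whose last
state is not a trap state. -/
def IsPlayPrefix (G : Game S) (ρ : ℕ → S) (n : ℕ) : Prop :=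
  (∀ i < n, G.E (ρ i) (ρ (i + 1))) ∧ (∀ j ≤ n, ρ j ∉ G.Goal) ∧ ¬ G.Trap (ρ n)

/-- Conformance of a play prefix with a symbolic reachability strategy. -/
def PrefixConformsR (G : Game S) (𝔖 : S → S → Prop) (ρ : ℕ → S) (n : ℕ) : Prop :=
  ∀ j < n, G.isReach (ρ j) → 𝔖 (ρ j) (ρ (j + 1))

/-- Conformance of a play prefix with a symbolic safety strategy. -/
def PrefixConformsS (G : Game S) (𝔖 : S → S → Prop) (ρ : ℕ → S) (n : ℕ) : Prop :=
  ∀ j < n, ¬ G.isReach (ρ j) → 𝔖 (ρ j) (ρ (j + 1))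

/-- A play conforms to a symbolic reachability strategy if all its play
prefixes do. -/
def PlayConformsR (G : Game S) (𝔖 : S → S → Prop) (p : G.Play) : Prop :=
  ∀ n : ℕ, (n : ℕ∞) ≤ p.len → G.IsPlayPrefix p.seq n → G.PrefixConformsR 𝔖 p.seq n

/-- A play conforms to a symbolic safety strategy if all its play
prefixes do. -/
def PlayConformsS (G : Game S) (𝔖 : S → S → Prop) (p : G.Play) : Prop :=
  ∀ n : ℕ, (n : ℕ∞) ≤ p.len → G.IsPlayPrefix p.seq n → G.PrefixConformsS 𝔖 p.seq n

/-- `𝔖` is a winning symbolic reachability strategy from `s`. -/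
def WinningSymbolicReachFrom (G : Game S) (𝔖 : S → S → Prop) (s : S) : Prop :=
  (∀ a b, 𝔖 a b → G.E a b) ∧
  (∀ p : G.Play, p.seq 0 = s → G.PlayConformsR 𝔖 p → G.ReachWinsPlay p) ∧
  (∀ (ρ : ℕ → S) (n : ℕ), ρ 0 = s → G.IsPlayPrefix ρ n → G.PrefixConformsR 𝔖 ρ n →
      G.isReach (ρ n) → ∃ s', 𝔖 (ρ n) s' ∧ G.Reach (ρ n) s')

/-- `𝔖` is a winning symbolic safety strategy from `s`. -/
def WinningSymbolicSafeFrom (G : Game S) (𝔖 : S → S → Prop) (s : S) : Prop :=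
  (∀ a b, 𝔖 a b → G.E a b) ∧
  (∀ p : G.Play, p.seq 0 = s → G.PlayConformsS 𝔖 p → G.SafeWinsPlay p) ∧
  (∀ (ρ : ℕ → S) (n : ℕ), ρ 0 = s → G.IsPlayPrefix ρ n → G.PrefixConformsS 𝔖 ρ n →
      ¬ G.isReach (ρ n) → ∃ s', 𝔖 (ρ n) s' ∧ G.Safe (ρ n) s')

/-- Bisimulations on `G`. -/
def IsBisimulation (G : Game S) (R : S → S → Prop) : Prop :=
  ∀ s1 s2, R s1 s2 →
    ((s1 ∈ G.Goal ↔ s2 ∈ G.Goal) ∧ (s1 ∈ G.Init ↔ s2 ∈ G.Init) ∧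
      (G.isReach s1 ↔ G.isReach s2)) ∧
    (∀ s1', G.E s1 s1' → ∃ s2', G.E s2 s2' ∧ R s1' s2') ∧
    (∀ s2', G.E s2 s2' → ∃ s1', G.E s1 s1' ∧ R s1' s2')

/-- The pre-game `⟨Init, Safe ∖ F, Reach ∖ F, Pre(Enf(F, G))⟩`. -/
def preGame (G : Game S) (F : S → S → Prop) : Game S where
  isReach := G.isReach
  Safe := fun a b => G.Safe a b ∧ ¬ F a b
  Reach := fun a b => G.Reach a b ∧ ¬ F a b
  Init := G.Init
  Goal := Pre (G.Enf F)
  safe_src := fun a b h => G.safe_src a b h.1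
  reach_src := fun a b h => G.reach_src a b h.1

/-- The post-game: transitions restricted to sources in `φ`. -/
def postGame (G : Game S) (φ : Set S) : Game S where
  isReach := G.isReach
  Safe := fun a b => G.Safe a b ∧ a ∈ φ
  Reach := fun a b => G.Reach a b ∧ a ∈ φ
  Init := G.Init
  Goal := G.Goal
  safe_src := fun a b h => G.safe_src a b h.1
  reach_src := fun a b h => G.reach_src a b h.1

end Game

/-!
REACH wins exactly from the attractor of the goal, the least set that contains `Goal` and is closed
under the one-step rules: a REACH state joins once one of its successors has joined, a SAFE state
once it has a successor and all of them have joined. A winning strategy is assembled by induction on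
the attractor; outside of it, SAFE can always move to a state that is again outside, so every REACH
strategy has a losing play. The one-step rules only mention what a bisimulation preserves, so
membership in the attractor is invariant under bisimulation.
-/

namespace Game

variable {S : Type u} {G : Game S} {R : S → S → Prop} {s t : S}

section Transitions

theorem reach_iff : G.Reach s t ↔ G.isReach s ∧ G.E s t :=
  ⟨fun h ↦ ⟨G.reach_src s t h, .inr h⟩,
    fun h ↦ h.2.resolve_left fun hsafe ↦ G.safe_src s t hsafe h.1⟩

theorem safe_iff : G.Safe s t ↔ ¬ G.isReach s ∧ G.E s t :=
  ⟨fun h ↦ ⟨G.safe_src s t h, .inl h⟩,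
    fun h ↦ h.2.resolve_right fun hreach ↦ h.1 (G.reach_src s t hreach)⟩

theorem not_trap_iff : ¬ G.Trap s ↔ ∃ t, G.E s t := by
  simp only [Trap, not_forall, not_not]

theorem exists_reach_of_not_trap (hs : G.isReach s) (htrap : ¬ G.Trap s) : ∃ t, G.Reach s t :=
  (not_trap_iff.1 htrap).imp fun _ hE ↦ reach_iff.2 ⟨hs, hE⟩

theorem exists_safe_of_not_trap (hs : ¬ G.isReach s) (htrap : ¬ G.Trap s) : ∃ t, G.Safe s t :=
  (not_trap_iff.1 htrap).imp fun _ hE ↦ safe_iff.2 ⟨hs, hE⟩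

end Transitions

/-- The attractor of `Goal` for REACH, as the least predicate closed under the one-step rules. The
rule `safe` asks for a successor because SAFE wins by being stuck outside `Goal`. -/
inductive Attractor (G : Game S) : S → Prop
  | goal {s : S} (hs : s ∈ G.Goal) : Attractor G s
  | reach {s t : S} (hst : G.Reach s t) (ht : Attractor G t) : Attractor G s
  | safe {s : S} (hs : ∃ t, G.Safe s t) (h : ∀ t, G.Safe s t → Attractor G t) : Attractor G s

namespace IsBisimulation

protected theorem flip (hR : G.IsBisimulation R) : G.IsBisimulation (flip R) := by
  intro s t hts
  obtain ⟨⟨hgoal, hinit, hreach⟩, hforth, hback⟩ := hR t s hts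
  exact ⟨⟨hgoal.symm, hinit.symm, hreach.symm⟩, hback, hforth⟩

theorem exists_reach (hR : G.IsBisimulation R) (hst : R s t) {s' : S} (hs : G.Reach s s') :
    ∃ t', G.Reach t t' ∧ R s' t' := by
  obtain ⟨⟨-, -, hreach⟩, hforth, -⟩ := hR s t hst
  obtain ⟨t', hE, hst'⟩ := hforth s' (reach_iff.1 hs).2
  exact ⟨t', reach_iff.2 ⟨hreach.1 (reach_iff.1 hs).1, hE⟩, hst'⟩

theorem exists_safe (hR : G.IsBisimulation R) (hst : R s t) {s' : S} (hs : G.Safe s s') :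
    ∃ t', G.Safe t t' ∧ R s' t' := by
  obtain ⟨⟨-, -, hreach⟩, hforth, -⟩ := hR s t hst
  obtain ⟨t', hE, hst'⟩ := hforth s' (safe_iff.1 hs).2
  exact ⟨t', safe_iff.2 ⟨mt hreach.2 (safe_iff.1 hs).1, hE⟩, hst'⟩

theorem attractor (hR : G.IsBisimulation R) (hst : R s t) (hs : G.Attractor s) :
    G.Attractor t := by
  induction hs generalizing t with
  | goal hs => exact .goal ((hR _ _ hst).1.1.1 hs)
  | reach hs _ ih =>
    obtain ⟨t', ht, hst'⟩ := hR.exists_reach hst hs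
    exact .reach ht (ih hst')
  | safe hs _ ih =>
    obtain ⟨s', hs'⟩ := hs
    obtain ⟨t', ht, -⟩ := hR.exists_safe hst hs'
    refine .safe ⟨t', ht⟩ fun u hu ↦ ?_
    obtain ⟨v, hv, huv⟩ := hR.flip.exists_safe hst hu
    exact ih v hv huv

theorem attractor_iff (hR : G.IsBisimulation R) (hst : R s t) : G.Attractor s ↔ G.Attractor t :=
  ⟨hR.attractor hst, hR.flip.attractor hst⟩

end IsBisimulation

section Histories

theorem listPrefix_succ_eq_append (f : ℕ → S) (n : ℕ) :
    listPrefix f (n + 1) = listPrefix f n ++ [f n] := by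
  simp [listPrefix, List.range_succ]

theorem listPrefix_succ_eq_cons (f : ℕ → S) (n : ℕ) :
    listPrefix f (n + 1) = f 0 :: listPrefix (fun i ↦ f (i + 1)) n := by
  simp [listPrefix, List.range_succ_eq_map, Function.comp_def]

theorem exists_seq_of_history (F : List S → S) (s : S) :
    ∃ ρ : ℕ → S, ρ 0 = s ∧ ∀ n, ρ (n + 1) = F (listPrefix ρ (n + 1)) := by
  let step (q : List S × S) : List S × S := (q.1 ++ [q.2], F (q.1 ++ [q.2]))
  let ρ (n : ℕ) : S := (step^[n] ([], s)).2
  have fst_eq (n : ℕ) : (step^[n] ([], s)).1 = listPrefix ρ n := by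
    induction n with
    | zero => rfl
    | succ n ih => rw [Function.iterate_succ_apply', listPrefix_succ_eq_append, ← ih]
  refine ⟨ρ, rfl, fun n ↦ ?_⟩
  rw [listPrefix_succ_eq_append, ← fst_eq]
  exact congrArg Prod.snd (Function.iterate_succ_apply' step n ([], s))

theorem exists_positionalStrategy_preferring [Nonempty S] (T : S → S → Prop) (W : S → Prop) :
    ∃ σ : List S → S, ∀ ω s, (∃ t, T s t) →
      T s (σ (ω ++ [s])) ∧ ((∃ t, T s t ∧ W t) → W (σ (ω ++ [s]))) := by
  have exists_choice (s : S) :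
      ∃ t, (∃ t, T s t) → T s t ∧ ((∃ t, T s t ∧ W t) → W t) := by
    by_cases hW : ∃ t, T s t ∧ W t
    · obtain ⟨t, hT, ht⟩ := hW
      exact ⟨t, fun _ ↦ ⟨hT, fun _ ↦ ht⟩⟩
    · by_cases hT : ∃ t, T s t
      · exact hT.imp fun t ht _ ↦ ⟨ht, fun h ↦ absurd h hW⟩
      · exact ⟨s, fun h ↦ absurd h hT⟩
  choose f hf using exists_choice
  exact ⟨fun l ↦ f (l.getLastD (Classical.arbitrary S)), fun ω s ↦ by simpa using hf s⟩

end Histories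

section Plays

theorem exists_play_seq_eq {ρ : ℕ → S} (hρ : ∀ n, ¬ G.Trap (ρ n) → G.E (ρ n) (ρ (n + 1))) :
    ∃ p : G.Play, p.seq = ρ := by
  classical
  by_cases htrap : ∃ n, G.Trap (ρ n)
  · refine ⟨⟨ρ, Nat.find htrap, fun i hi ↦ hρ i (Nat.find_min htrap (by exact_mod_cast hi)),
      fun n hn ↦ ?_⟩, rfl⟩
    rw [← Nat.cast_inj.1 hn]
    exact Nat.find_spec htrap
  · exact ⟨⟨ρ, ⊤, fun i _ ↦ hρ i fun hi ↦ htrap ⟨i, hi⟩,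
      fun n hn ↦ absurd hn.symm (ENat.natCast_ne_top n)⟩, rfl⟩

theorem exists_play_consistent {σ τ : List S → S} (hσ : G.IsReachStrategy σ)
    (hτ : G.IsSafeStrategy τ) (s : S) :
    ∃ p : G.Play, p.seq 0 = s ∧ G.ConsistentR σ p ∧ G.ConsistentS τ p := by
  classical
  obtain ⟨ρ, hρ0, hρ⟩ := exists_seq_of_history
    (fun l ↦ if G.isReach (l.getLastD s) then σ l else τ l) s
  have next_eq (n : ℕ) : ρ (n + 1) =
      if G.isReach (ρ n) then σ (listPrefix ρ (n + 1)) else τ (listPrefix ρ (n + 1)) := by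
    simpa [listPrefix_succ_eq_append] using hρ n
  have edge (n : ℕ) (htrap : ¬ G.Trap (ρ n)) : G.E (ρ n) (ρ (n + 1)) := by
    rw [next_eq, listPrefix_succ_eq_append]
    split_ifs with hreach
    · exact .inr (hσ _ _ hreach htrap)
    · exact .inl (hτ _ _ hreach htrap)
  obtain ⟨p, rfl⟩ := exists_play_seq_eq edge
  exact ⟨p, hρ0, fun i _ hi ↦ by rw [next_eq, if_pos hi], fun i _ hi ↦ by rw [next_eq, if_neg hi]⟩

namespace Play

theorem len_ne_zero (p : G.Play) (h : ¬ G.Trap (p.seq 0)) : p.len ≠ 0 :=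
  fun hlen ↦ h (p.fin_trap 0 hlen)

theorem len_sub_one_add_one (p : G.Play) (h : p.len ≠ 0) : p.len - 1 + 1 = p.len :=
  tsub_add_cancel_of_le (Order.one_le_iff_ne_zero.2 h)

/-- The play obtained by dropping the first state, possible when at least one move is made. -/
def tail (p : G.Play) (h : p.len ≠ 0) : G.Play where
  seq n := p.seq (n + 1)
  len := p.len - 1
  step i hi := p.step (i + 1) (by exact_mod_cast lt_tsub_iff_right.1 hi)
  fin_trap n hn := p.fin_trap (n + 1) (by rw [← p.len_sub_one_add_one h, hn, Nat.cast_succ])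

theorem reachWinsPlay_of_tail {p : G.Play} {h : p.len ≠ 0} (hp : G.ReachWinsPlay (p.tail h)) :
    G.ReachWinsPlay p := by
  obtain ⟨k, hk, hgoal⟩ := hp
  refine ⟨k + 1, ?_, hgoal⟩
  rw [← p.len_sub_one_add_one h, Nat.cast_succ]
  gcongr
  exact hk

end Play

end Plays

section Strategies

/-- The strategy that moves by `τ` first and then, from the second state `t` of the play on, follows
`σ t` as if the play had started at `t`. -/
def switchAfterFirst (τ : List S → S) (σ : S → List S → S) : List S → S
  | _ :: t :: ω => σ t (t :: ω)
  | ω => τ ω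

variable {τ : List S → S} {σ : S → List S → S}

theorem IsReachStrategy.switchAfterFirst (hτ : G.IsReachStrategy τ)
    (hσ : ∀ t, G.IsReachStrategy (σ t)) : G.IsReachStrategy (switchAfterFirst τ σ)
  | [], s => hτ [] s
  | [_], s => hσ s [] s
  | _ :: t :: ω, s => hσ t (t :: ω) s

theorem ConsistentR.tail {p : G.Play} (hp : G.ConsistentR (switchAfterFirst τ σ) p)
    (hlen : p.len ≠ 0) : G.ConsistentR (σ (p.seq 1)) (p.tail hlen) := by
  intro i hi hreach
  have next_eq := hp (i + 1) (by exact_mod_cast lt_tsub_iff_right.1 hi) hreach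
  rw [listPrefix_succ_eq_cons, listPrefix_succ_eq_cons] at next_eq
  rw [listPrefix_succ_eq_cons]
  exact next_eq

theorem exists_isReachStrategy_preferring [Nonempty S] (G : Game S) (W : S → Prop) :
    ∃ σ, G.IsReachStrategy σ ∧ ∀ ω s, (∃ t, G.Reach s t ∧ W t) → W (σ (ω ++ [s])) := by
  obtain ⟨σ, hσ⟩ := exists_positionalStrategy_preferring G.Reach W
  exact ⟨σ, fun ω s hs htrap ↦ (hσ ω s (exists_reach_of_not_trap hs htrap)).1,
    fun ω s h ↦ (hσ ω s (h.imp fun _ ↦ And.left)).2 h⟩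

theorem exists_isSafeStrategy_preferring [Nonempty S] (G : Game S) (W : S → Prop) :
    ∃ τ, G.IsSafeStrategy τ ∧ ∀ ω s, (∃ t, G.Safe s t ∧ W t) → W (τ (ω ++ [s])) := by
  obtain ⟨τ, hτ⟩ := exists_positionalStrategy_preferring G.Safe W
  exact ⟨τ, fun ω s hs htrap ↦ (hτ ω s (exists_safe_of_not_trap hs htrap)).1,
    fun ω s h ↦ (hτ ω s (h.imp fun _ ↦ And.left)).2 h⟩

end Strategies

section WinningRegion

theorem reachWinsFrom_of_mem_goal (hs : s ∈ G.Goal) : G.ReachWinsFrom s := by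
  have : Nonempty S := ⟨s⟩
  obtain ⟨σ, hσ, -⟩ := G.exists_isReachStrategy_preferring fun _ ↦ True
  exact ⟨σ, hσ, fun p hp _ ↦ ⟨0, zero_le, hp ▸ hs⟩⟩

theorem reachWinsFrom_of_forall_next {τ : List S → S} (hτ : G.IsReachStrategy τ)
    (hs : ¬ G.Trap s)
    (h : ∀ t, G.E s t → (G.isReach s → t = τ [s]) → G.ReachWinsFrom t) : G.ReachWinsFrom s := by
  have exists_strategy (t : S) :
      ∃ σ, G.IsReachStrategy σ ∧ (G.ReachWinsFrom t → G.WinningReachStrategyFrom σ t) := by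
    by_cases ht : G.ReachWinsFrom t
    · exact ht.imp fun σ hσ ↦ ⟨hσ.1, fun _ ↦ hσ⟩
    · exact ⟨τ, hτ, fun ht' ↦ absurd ht' ht⟩
  choose σ hσ hσwin using exists_strategy
  refine ⟨switchAfterFirst τ σ, hτ.switchAfterFirst hσ, ?_⟩
  rintro p rfl hp
  have hlen : p.len ≠ 0 := p.len_ne_zero hs
  have hpos : ((0 : ℕ) : ℕ∞) < p.len := pos_iff_ne_zero.2 hlen
  have hwin : G.ReachWinsFrom (p.seq 1) := h (p.seq 1) (p.step 0 hpos) (hp 0 hpos)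
  exact Play.reachWinsPlay_of_tail ((hσwin _ hwin).2 (p.tail hlen) rfl (hp.tail hlen))

theorem Attractor.reachWinsFrom (hs : G.Attractor s) : G.ReachWinsFrom s := by
  have : Nonempty S := ⟨s⟩
  obtain ⟨τ, hτ, hτwin⟩ := G.exists_isReachStrategy_preferring G.ReachWinsFrom
  induction hs with
  | goal hs => exact reachWinsFrom_of_mem_goal hs
  | @reach s t hst _ ih =>
    refine reachWinsFrom_of_forall_next hτ (not_trap_iff.2 ⟨t, .inr hst⟩) fun u _ hu ↦ ?_
    rw [hu (reach_iff.1 hst).1]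
    exact hτwin [] s ⟨t, hst, ih⟩
  | safe hs _ ih =>
    obtain ⟨t, hst⟩ := hs
    refine reachWinsFrom_of_forall_next hτ (not_trap_iff.2 ⟨t, .inl hst⟩) fun u hu _ ↦ ?_
    exact ih u (safe_iff.2 ⟨(safe_iff.1 hst).1, hu⟩)

theorem exists_safe_not_attractor (hs : ¬ G.Attractor s) (hsafe : ∃ t, G.Safe s t) :
    ∃ t, G.Safe s t ∧ ¬ G.Attractor t := by
  by_contra! h
  exact hs (.safe hsafe h)

theorem exists_isSafeStrategy_avoiding_attractor [Nonempty S] (G : Game S) :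
    ∃ τ, G.IsSafeStrategy τ ∧ ∀ p : G.Play, G.ConsistentS τ p → ¬ G.Attractor (p.seq 0) →
      ∀ n : ℕ, (n : ℕ∞) ≤ p.len → ¬ G.Attractor (p.seq n) := by
  obtain ⟨τ, hτ, hτavoid⟩ := G.exists_isSafeStrategy_preferring fun t ↦ ¬ G.Attractor t
  refine ⟨τ, hτ, fun p hp h0 n ↦ ?_⟩
  induction n with
  | zero => exact fun _ ↦ h0
  | succ n ih =>
    intro hn
    have hlt : (n : ℕ∞) < p.len := ENat.natCast_add_one_le_iff.1 (by exact_mod_cast hn)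
    have hE : G.E (p.seq n) (p.seq (n + 1)) := p.step n hlt
    by_cases hreach : G.isReach (p.seq n)
    · exact fun h ↦ ih hlt.le (.reach (reach_iff.2 ⟨hreach, hE⟩) h)
    · rw [hp n hlt hreach, listPrefix_succ_eq_append]
      exact hτavoid _ _ (exists_safe_not_attractor (ih hlt.le) ⟨_, safe_iff.2 ⟨hreach, hE⟩⟩)

theorem ReachWinsFrom.attractor (hs : G.ReachWinsFrom s) : G.Attractor s := by
  by_contra hattr
  have : Nonempty S := ⟨s⟩
  obtain ⟨σ, hσ, hwin⟩ := hs
  obtain ⟨τ, hτ, havoid⟩ := G.exists_isSafeStrategy_avoiding_attractor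
  obtain ⟨p, rfl, hpσ, hpτ⟩ := exists_play_consistent hσ hτ s
  obtain ⟨k, hk, hgoal⟩ := hwin p rfl hpσ
  exact havoid p hpτ hattr k hk (.goal hgoal)

theorem reachWinsFrom_iff_attractor : G.ReachWinsFrom s ↔ G.Attractor s :=
  ⟨ReachWinsFrom.attractor, Attractor.reachWinsFrom⟩

end WinningRegion

end Game

/-- bisimilar states are won by the same player (REACH side). -/
theorem bisimulation_preserves_reach_win {S : Type u} (G : Game S)
    (R : S → S → Prop) (hR : G.IsBisimulation R)
    (s1 s2 : S) (h : R s1 s2) :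
    G.ReachWinsFrom s1 ↔ G.ReachWinsFrom s2 := by
  rw [Game.reachWinsFrom_iff_attractor, Game.reachWinsFrom_iff_attractor]
  exact hR.attractor_iff h
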